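/- The center of the group G₂₉ consists exactly of the four scalar matrices Id, i·Id, -Id, -i·Id; in particular Z(G₂₉) is cyclic of order 4 (isomorphic to μ₄). -/

import Mathlib

open Matrix Complex

/-- The generator `s₁ = diag(1,1,1,-1)` of Mukai's group `G₂₉`. -/
def s1 : Matrix (Fin 4) (Fin 4) ℂ := !![1,0,0,0; 0,1,0,0; 0,0,1,0; 0,0,0,-1]

/-- The generator `s₂ = (1/2)·[[1,1,i,i],[1,1,-i,-i],[-i,i,1,-1],[-i,i,-1,1]]` of `G₂₉`. -/
noncomputable def s2 : Matrix (Fin 4) (Fin 4) ℂ :=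
  (1/2 : ℂ) • !![1, 1, I, I; 1, 1, -I, -I; -I, I, 1, -1; -I, I, -1, 1]

/-- The generator `s₃` (the transposition of the first two coordinates) of `G₂₉`. -/
def s3 : Matrix (Fin 4) (Fin 4) ℂ := !![0,1,0,0; 1,0,0,0; 0,0,1,0; 0,0,0,1]

/-- The generator `s₄` (the transposition of the middle two coordinates) of `G₂₉`. -/
def s4 : Matrix (Fin 4) (Fin 4) ℂ := !![1,0,0,0; 0,0,1,0; 0,1,0,0; 0,0,0,1]

/-- Mukai's group `G₂₉` (the Shephard–Todd group `G_29`): the subgroup of `GL(4,ℂ)`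
generated by `s₁`, `s₂`, `s₃`, `s₄`. -/
def G29 : Subgroup (GL (Fin 4) ℂ) :=
  Subgroup.closure
    {g | (↑g : Matrix (Fin 4) (Fin 4) ℂ) ∈ ({s1, s2, s3, s4} : Set (Matrix (Fin 4) (Fin 4) ℂ))}

lemma s1_sq : s1 * s1 = 1 := by
  ext i j; fin_cases i <;> fin_cases j <;> simp [s1, Matrix.mul_apply, Fin.sum_univ_four]

lemma s3_sq : s3 * s3 = 1 := by
  ext i j; fin_cases i <;> fin_cases j <;> simp [s3, Matrix.mul_apply, Fin.sum_univ_four]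

lemma s4_sq : s4 * s4 = 1 := by
  ext i j; fin_cases i <;> fin_cases j <;> simp [s4, Matrix.mul_apply, Fin.sum_univ_four]

lemma s2_sq : s2 * s2 = 1 := by
  have hI : I ^ 2 = -1 := I_sq
  ext i j; fin_cases i <;> fin_cases j <;>
    simp [s2, Matrix.mul_apply, Fin.sum_univ_four] <;> ring_nf <;> simp [hI] <;> norm_num

/-- The product of the four generators (a Coxeter element). -/
noncomputable def cox : Matrix (Fin 4) (Fin 4) ℂ :=
  (1/2 : ℂ) • !![1, I, 1, I; 1, -I, 1, -I; I, 1, -I, -1; -I, 1, I, -1]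

lemma cox_eq : s1 * s2 * s3 * s4 = cox := by
  ext i j; fin_cases i <;> fin_cases j <;>
    simp [s1, s2, s3, s4, cox, Matrix.mul_apply, Fin.sum_univ_four]

lemma cox_pow : cox ^ 5 = I • (1 : Matrix (Fin 4) (Fin 4) ℂ) := by
  have hI : I ^ 2 = -1 := I_sq
  have h2 : cox ^ 2 = (1/2 : ℂ) • !![1+I, 1+I, 0, 0; 0, 0, 1-I, -1+I; 1+I, -1-I, 0, 0;
      0, 0, 1-I, 1-I] := by
    rw [pow_two]
    ext i j; fin_cases i <;> fin_cases j <;>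
      simp [cox, Matrix.mul_apply, Fin.sum_univ_four] <;> grind
  have h4 : cox ^ 4 = (1/2 : ℂ) • !![I, I, 1, -1; 1, -1, I, I; I, I, -1, 1; 1, -1, -I, -I] := by
    rw [show cox ^ 4 = cox ^ 2 * cox ^ 2 from pow_add cox 2 2, h2]
    ext i j; fin_cases i <;> fin_cases j <;>
      simp [Matrix.mul_apply, Fin.sum_univ_four] <;> grind
  rw [pow_succ, h4]
  ext i j; fin_cases i <;> fin_cases j <;>
    simp [cox, Matrix.mul_apply, Fin.sum_univ_four] <;> grind

/-- The Gaussian rationals inside `ℂ`. -/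
def gaussRat : Subring ℂ where
  carrier := {z | ∃ a b : ℚ, z = a + b * I}
  mul_mem' := by
    rintro _ _ ⟨a, b, rfl⟩ ⟨c, d, rfl⟩
    refine ⟨a * c - b * d, a * d + b * c, ?_⟩
    push_cast
    linear_combination (b * d : ℂ) * I_sq
  one_mem' := ⟨1, 0, by simp⟩
  add_mem' := by
    rintro _ _ ⟨a, b, rfl⟩ ⟨c, d, rfl⟩
    exact ⟨a + c, b + d, by push_cast; ring⟩
  zero_mem' := ⟨0, 0, by simp⟩
  neg_mem' := by
    rintro _ ⟨a, b, rfl⟩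
    exact ⟨-a, -b, by push_cast; ring⟩

lemma I_mem_gr : I ∈ gaussRat := ⟨0, 1, by simp⟩
lemma half_mem_gr : (2⁻¹ : ℂ) ∈ gaussRat := ⟨1/2, 0, by simp⟩

lemma gen_entries {M : Matrix (Fin 4) (Fin 4) ℂ}
    (hM : M ∈ ({s1, s2, s3, s4} : Set (Matrix (Fin 4) (Fin 4) ℂ))) :
    M * M = 1 ∧ ∀ i j, M i j ∈ gaussRat := by
  have h0 := gaussRat.zero_mem
  have h1 := gaussRat.one_mem
  have h2 := half_mem_gr
  have h3 := gaussRat.mul_mem half_mem_gr I_mem_gr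
  rcases hM with rfl | rfl | rfl | rfl
  · refine ⟨s1_sq, fun i j => ?_⟩
    fin_cases i <;> fin_cases j <;> simp [s1, h0, h1]
  · refine ⟨s2_sq, fun i j => ?_⟩
    fin_cases i <;> fin_cases j <;> simp [s2, h2, h3]
  · refine ⟨s3_sq, fun i j => ?_⟩
    fin_cases i <;> fin_cases j <;> simp [s3, h0, h1]
  · refine ⟨s4_sq, fun i j => ?_⟩
    fin_cases i <;> fin_cases j <;> simp [s4, h0, h1]

lemma mul_entries {M N : Matrix (Fin 4) (Fin 4) ℂ} (hM : ∀ i j, M i j ∈ gaussRat)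
    (hN : ∀ i j, N i j ∈ gaussRat) : ∀ i j, (M * N) i j ∈ gaussRat := by
  intro i j
  rw [Matrix.mul_apply]
  exact gaussRat.sum_mem fun k _ => gaussRat.mul_mem (hM i k) (hN k j)

lemma G29_inv {g : GL (Fin 4) ℂ} (hg : g ∈ G29) :
    (g : Matrix (Fin 4) (Fin 4) ℂ).det ^ 2 = 1 ∧
      (∀ i j, (g : Matrix (Fin 4) (Fin 4) ℂ) i j ∈ gaussRat) ∧
      ∀ i j, ((g⁻¹ : GL (Fin 4) ℂ) : Matrix (Fin 4) (Fin 4) ℂ) i j ∈ gaussRat := by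
  unfold G29 at hg
  induction hg using Subgroup.closure_induction with
  | mem x hx =>
    obtain ⟨hs, he⟩ := gen_entries hx
    have hxx : x⁻¹ = x := by
      rw [inv_eq_iff_mul_eq_one]
      ext1
      simpa using hs
    refine ⟨?_, he, ?_⟩
    · rw [pow_two, ← Matrix.det_mul, hs, Matrix.det_one]
    · rw [hxx]; exact he
  | one =>
    have : ∀ i j, (1 : Matrix (Fin 4) (Fin 4) ℂ) i j ∈ gaussRat := by
      intro i j
      rw [Matrix.one_apply]
      split_ifs
      · exact gaussRat.one_mem
      · exact gaussRat.zero_mem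
    refine ⟨by simp, by simpa using this, by simpa using this⟩
  | mul x y _ _ hx hy =>
    refine ⟨?_, ?_, ?_⟩
    · rw [Units.val_mul, Matrix.det_mul, mul_pow, hx.1, hy.1, one_mul]
    · rw [Units.val_mul]; exact mul_entries hx.2.1 hy.2.1
    · rw [_root_.mul_inv_rev, Units.val_mul]; exact mul_entries hy.2.2 hx.2.2
  | inv x _ hx =>
    refine ⟨?_, hx.2.2, by rw [inv_inv]; exact hx.2.1⟩
    have h : (x : Matrix (Fin 4) (Fin 4) ℂ).det *
        ((x⁻¹ : GL (Fin 4) ℂ) : Matrix (Fin 4) (Fin 4) ℂ).det = 1 := by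
      rw [← Matrix.det_mul, ← Units.val_mul, mul_inv_cancel, Units.val_one, Matrix.det_one]
    have h' := congrArg (· ^ 2) h
    simpa [mul_pow, hx.1] using h'

lemma gr_root {z : ℂ} (hz : z ∈ gaussRat) (h8 : (z ^ 4) ^ 2 = 1) :
    z = 1 ∨ z = I ∨ z = -1 ∨ z = -I := by
  rcases mul_self_eq_one_iff.mp ((pow_two (z ^ 4)).symm.trans h8) with h | h
  · have : (z - 1) * ((z - I) * ((z + 1) * (z + I))) = 0 := by
      linear_combination h + (1 - z ^ 2) * I_sq
    simpa [sub_eq_zero, add_eq_zero_iff_eq_neg] using this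
  · exfalso
    obtain ⟨a, b, rfl⟩ := hz
    have key : (((a ^ 4 - 6 * a ^ 2 * b ^ 2 + b ^ 4 + 1 : ℚ) : ℝ) : ℂ) +
        ((4 * a * b * (a ^ 2 - b ^ 2) : ℚ) : ℝ) * I = 0 := by
      push_cast
      linear_combination h - ((b:ℂ) ^ 4 * (I ^ 2 - 1) + 6 * a ^ 2 * b ^ 2 + 4 * a * b ^ 3 * I) * I_sq
    have hre := congrArg Complex.re key
    have him := congrArg Complex.im key
    simp only [add_re, add_im, mul_re, mul_im, ofReal_re, ofReal_im, I_re, I_im, zero_re, zero_im,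
      mul_zero, mul_one, zero_mul, sub_zero, add_zero, zero_add] at hre him
    norm_cast at hre him
    have hcase : a * b = 0 ∨ a ^ 2 = b ^ 2 := by
      rcases mul_eq_zero.mp him with h | h
      · left; linarith
      · right; linarith
    rcases hcase with h0 | h0
    · have : a ^ 2 * b ^ 2 = 0 := by rw [← mul_pow, h0]; norm_num
      nlinarith [sq_nonneg (a ^ 2), sq_nonneg (b ^ 2)]
    · have h1 : (2 * a ^ 2 - 1) * (2 * a ^ 2 + 1) = 0 := by
        linear_combination -hre + (5 * a ^ 2 - b ^ 2) * h0
      have h2 : (2 * a) * (2 * a) = 2 := by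
        rcases mul_eq_zero.mp h1 with h | h
        · linarith
        · nlinarith [sq_nonneg a]
      have : IsSquare (2 : ℚ) := ⟨2 * a, h2.symm⟩
      revert this
      norm_num
      try decide

lemma scalar_of_comm {g : Matrix (Fin 4) (Fin 4) ℂ} (h1 : g * s1 = s1 * g) (h2 : g * s2 = s2 * g)
    (h3 : g * s3 = s3 * g) (h4 : g * s4 = s4 * g) : g = g 0 0 • 1 := by
  have hI : I ^ 2 = -1 := I_sq
  have e1 := fun i j => congrFun (congrFun h1 i) j
  have e2 := fun i j => congrFun (congrFun h2 i) j
  have e3 := fun i j => congrFun (congrFun h3 i) j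
  have e4 := fun i j => congrFun (congrFun h4 i) j
  have a03 := e1 0 3
  have a13 := e1 1 3
  have a23 := e1 2 3
  have a30 := e1 3 0
  have a31 := e1 3 1
  have a32 := e1 3 2
  have b01 := e3 0 1
  have b00 := e3 0 0
  have b02 := e3 0 2
  have b20 := e3 2 0
  have c01 := e4 0 1
  have c10 := e4 1 0
  have c12 := e4 1 2
  have d02 := e2 0 2
  have d03 := e2 0 3
  clear e1 e2 e3 e4 h1 h2 h3 h4
  simp [s1, Matrix.mul_apply, Fin.sum_univ_four] at a03 a13 a23 a30 a31 a32
  simp [s3, Matrix.mul_apply, Fin.sum_univ_four] at b01 b00 b02 b20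
  simp [s4, Matrix.mul_apply, Fin.sum_univ_four] at c01 c10 c12
  simp [s2, Matrix.mul_apply, Fin.sum_univ_four] at d02 d03
  have hb : g 0 1 = 0 := by grind
  ext i j; fin_cases i <;> fin_cases j <;> simp <;> grind

/-- Involutive matrix as an element of `GL`. -/
noncomputable def mkInv (M : Matrix (Fin 4) (Fin 4) ℂ) (h : M * M = 1) : GL (Fin 4) ℂ := ⟨M, M, h, h⟩

lemma mkInv_mem {M : Matrix (Fin 4) (Fin 4) ℂ} (h : M * M = 1)
    (hM : M ∈ ({s1, s2, s3, s4} : Set (Matrix (Fin 4) (Fin 4) ℂ))) : mkInv M h ∈ G29 :=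
  Subgroup.subset_closure hM

/-- The scalar matrix `i` in `GL(4,ℂ)`. -/
noncomputable def iGL : GL (Fin 4) ℂ :=
  (mkInv s1 s1_sq * mkInv s2 s2_sq * mkInv s3 s3_sq * mkInv s4 s4_sq) ^ 5

lemma iGL_val : (iGL : Matrix (Fin 4) (Fin 4) ℂ) = I • (1 : Matrix (Fin 4) (Fin 4) ℂ) := by
  rw [← cox_pow, ← cox_eq]; rfl

lemma iGL_mem : iGL ∈ G29 := by
  refine pow_mem (mul_mem (mul_mem (mul_mem ?_ ?_) ?_) ?_) 5 <;> exact mkInv_mem _ (by simp)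

lemma iGL_pow_val (k : ℕ) :
    ((iGL ^ k : GL (Fin 4) ℂ) : Matrix (Fin 4) (Fin 4) ℂ) = I ^ k • (1 : Matrix (Fin 4) (Fin 4) ℂ) := by
  rw [Units.val_pow_eq_pow_val, iGL_val, smul_pow, one_pow]

lemma main_set :
    {g : GL (Fin 4) ℂ | g ∈ G29 ∧ ∀ h ∈ G29, g * h = h * g} =
      {g : GL (Fin 4) ℂ |
        (↑g : Matrix (Fin 4) (Fin 4) ℂ) = 1 ∨
        (↑g : Matrix (Fin 4) (Fin 4) ℂ) = I • (1 : Matrix (Fin 4) (Fin 4) ℂ) ∨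
        (↑g : Matrix (Fin 4) (Fin 4) ℂ) = -1 ∨
        (↑g : Matrix (Fin 4) (Fin 4) ℂ) = (-I) • (1 : Matrix (Fin 4) (Fin 4) ℂ)} := by
  ext g
  constructor
  · rintro ⟨hg, hc⟩
    have hcomm : ∀ (M : Matrix (Fin 4) (Fin 4) ℂ) (h : M * M = 1),
        M ∈ ({s1, s2, s3, s4} : Set (Matrix (Fin 4) (Fin 4) ℂ)) →
        (g : Matrix (Fin 4) (Fin 4) ℂ) * M = M * g := by
      intro M h hM
      exact congrArg Units.val (hc _ (mkInv_mem h hM))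
    have hs := scalar_of_comm (hcomm s1 s1_sq (by simp)) (hcomm s2 s2_sq (by simp))
      (hcomm s3 s3_sq (by simp)) (hcomm s4 s4_sq (by simp))
    obtain ⟨hd, he, -⟩ := G29_inv hg
    rw [hs, Matrix.det_smul, Matrix.det_one, mul_one, Fintype.card_fin] at hd
    rcases gr_root (he 0 0) hd with h | h | h | h <;> rw [h] at hs
    · left; simpa using hs
    · right; left; exact hs
    · right; right; left; simpa using hs
    · right; right; right; exact hs
  · intro hg
    have : ∃ k : ℕ, g = iGL ^ k := by
      rcases hg with h | h | h | h
      · exact ⟨0, by ext1; rw [iGL_pow_val, h]; simp⟩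
      · exact ⟨1, by ext1; rw [iGL_pow_val, h]; simp⟩
      · exact ⟨2, by ext1; rw [iGL_pow_val, h]; simp⟩
      · exact ⟨3, by ext1; rw [iGL_pow_val, h, I_pow_three]⟩
    obtain ⟨k, rfl⟩ := this
    refine ⟨pow_mem iGL_mem k, fun h _ => ?_⟩
    ext1
    rw [Units.val_mul, Units.val_mul, iGL_pow_val]
    simp

lemma smul_one_inj {a b : ℂ}
    (h : a • (1 : Matrix (Fin 4) (Fin 4) ℂ) = b • (1 : Matrix (Fin 4) (Fin 4) ℂ)) : a = b := by
  simpa using congrFun (congrFun h 0) 0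

/-- The center of `G₂₉` consists exactly of the four scalar matrices
`Id, i·Id, -Id, -i·Id`; in particular it has order `4`. -/
theorem stmt_12 :
    {g : GL (Fin 4) ℂ | g ∈ G29 ∧ ∀ h ∈ G29, g * h = h * g} =
      {g : GL (Fin 4) ℂ |
        (↑g : Matrix (Fin 4) (Fin 4) ℂ) = 1 ∨
        (↑g : Matrix (Fin 4) (Fin 4) ℂ) = I • (1 : Matrix (Fin 4) (Fin 4) ℂ) ∨
        (↑g : Matrix (Fin 4) (Fin 4) ℂ) = -1 ∨
        (↑g : Matrix (Fin 4) (Fin 4) ℂ) = (-I) • (1 : Matrix (Fin 4) (Fin 4) ℂ)} ∧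
    Set.ncard {g : GL (Fin 4) ℂ | g ∈ G29 ∧ ∀ h ∈ G29, g * h = h * g} = 4 := by
  refine ⟨main_set, ?_⟩
  rw [main_set]
  have hset : {g : GL (Fin 4) ℂ |
        (↑g : Matrix (Fin 4) (Fin 4) ℂ) = 1 ∨
        (↑g : Matrix (Fin 4) (Fin 4) ℂ) = I • (1 : Matrix (Fin 4) (Fin 4) ℂ) ∨
        (↑g : Matrix (Fin 4) (Fin 4) ℂ) = -1 ∨
        (↑g : Matrix (Fin 4) (Fin 4) ℂ) = (-I) • (1 : Matrix (Fin 4) (Fin 4) ℂ)} =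
      (((Finset.range 4).image (fun k => iGL ^ k) : Finset (GL (Fin 4) ℂ)) : Set (GL (Fin 4) ℂ)) := by
    ext g
    have e : ∀ k, g = iGL ^ k ↔
        (g : Matrix (Fin 4) (Fin 4) ℂ) = I ^ k • (1 : Matrix (Fin 4) (Fin 4) ℂ) := by
      intro k
      rw [← iGL_pow_val, Units.ext_iff]
    have e0 := e 0
    have e1 := e 1
    have e2 := e 2
    have e3 := e 3
    simp only [pow_zero, pow_one, one_smul, I_sq, I_pow_three, neg_smul] at e0 e1 e2 e3
    simp only [Finset.coe_image, Finset.coe_range, Set.mem_image, Set.mem_Iio, Set.mem_setOf_eq,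
      neg_smul]
    constructor
    · rintro (h | h | h | h)
      · exact ⟨0, by norm_num, by rw [pow_zero]; exact (e0.mpr h).symm⟩
      · exact ⟨1, by norm_num, by rw [pow_one]; exact (e1.mpr h).symm⟩
      · exact ⟨2, by norm_num, (e2.mpr h).symm⟩
      · exact ⟨3, by norm_num, (e3.mpr h).symm⟩
    · rintro ⟨k, hk, h⟩
      interval_cases k
      · exact Or.inl (e0.mp (by rw [← h, pow_zero]))
      · exact Or.inr (Or.inl (e1.mp (by rw [← h, pow_one])))
      · exact Or.inr (Or.inr (Or.inl (e2.mp h.symm)))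
      · exact Or.inr (Or.inr (Or.inr (e3.mp h.symm)))
  rw [hset, Set.ncard_coe_finset, Finset.card_image_of_injOn, Finset.card_range]
  intro a ha b hb hab
  have hab' := congrArg Units.val hab
  simp only [iGL_pow_val] at hab'
  have hI := smul_one_inj hab'
  simp only [Finset.coe_range, Set.mem_Iio] at ha hb
  interval_cases a <;> interval_cases b <;> first | rfl | (exfalso; simp [Complex.ext_iff, pow_succ] at hI; done) | (exfalso; norm_num [Complex.ext_iff, pow_succ] at hI)
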